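/- arXiv:2505.23211 — 3 statements merged into one kernel-verified Lean document; each statement's English description precedes it below -/
import Mathlib

section
/- Let 0<p<∞, let Ψ belong to the class 𝓛, and let ω be a radial weight in the class D. Then there exists δ₁ > 0, depending only on ω, Ψ and p, such that for every δ ∈ (0,δ₁) and every analytic function f on 𝔻 satisfying |f(z)| ≤ C₀·(1−|z|)^{−δ} for all z ∈ 𝔻 and some constant C₀ > 0, one has ∫_𝔻 |f(z)|^p Ψ(|f(z)|) ω(z) dA(z) < ∞, i.e. f ∈ A^p_{ω,Ψ}. -/
open MeasureTheory Complex Filter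

noncomputable section

/-- The open unit disk in the complex plane. -/
def unitDisk : Set ℂ := {z : ℂ | ‖z‖ < 1}

/-- The Lebesgue area measure on `ℂ`, normalized so that the unit disk has measure `1`. -/
def areaM : Measure ℂ := (ENNReal.ofReal Real.pi)⁻¹ • (volume : Measure ℂ)

/-- A function `ω : ℂ → ℝ` is radial if its value depends only on the modulus. -/
def IsRadial (ω : ℂ → ℝ) : Prop := ∀ z w : ℂ, ‖z‖ = ‖w‖ → ω z = ω w

/-- A weight: nonnegative on the unit disk and integrable there. -/
def IsWeight (ω : ℂ → ℝ) : Prop :=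
  (∀ z ∈ unitDisk, 0 ≤ ω z) ∧ IntegrableOn ω unitDisk areaM

/-- The tail integral `ω̂(r) = ∫_r^1 ω(s) ds` of a radial weight. -/
def omHat (ω : ℂ → ℝ) (r : ℝ) : ℝ := ∫ s in Set.Ioo r 1, ω (s : ℂ)

/-- `ω̂(r) > 0` for all `0 ≤ r < 1`. -/
def OmHatPos (ω : ℂ → ℝ) : Prop := ∀ r : ℝ, 0 ≤ r → r < 1 → 0 < omHat ω r

/-- The class `D̂` of upper doubling radial weights. -/
def Dhat (ω : ℂ → ℝ) : Prop :=
  ∃ C > (1 : ℝ), ∀ r : ℝ, 0 ≤ r → r < 1 → omHat ω r ≤ C * omHat ω ((1 + r) / 2)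

/-- The class `Ď` of lower doubling radial weights. -/
def Dcheck (ω : ℂ → ℝ) : Prop :=
  ∃ C > (1 : ℝ), ∃ K > (1 : ℝ), ∀ r : ℝ, 0 ≤ r → r < 1 →
    omHat ω r ≥ C * omHat ω (1 - (1 - r) / K)

/-- The class `D = D̂ ∩ Ď`. -/
def DoublingD (ω : ℂ → ℝ) : Prop := Dhat ω ∧ Dcheck ω

/-- Almost increasing on `[0, ∞)`. -/
def AlmostIncreasing (Ψ : ℝ → ℝ) : Prop :=
  ∃ C > (0 : ℝ), ∀ x y : ℝ, 0 ≤ x → x ≤ y → Ψ x ≤ C * Ψ y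

/-- Almost decreasing on `[0, ∞)`. -/
def AlmostDecreasing (Ψ : ℝ → ℝ) : Prop :=
  ∃ C > (0 : ℝ), ∀ x y : ℝ, 0 ≤ x → x ≤ y → Ψ y ≤ C * Ψ x

/-- The class `𝓛`: positive, almost monotone functions with `Ψ(x) ≍ Ψ(x²)`. -/
def InClassL (Ψ : ℝ → ℝ) : Prop :=
  (∀ x : ℝ, 0 ≤ x → 0 < Ψ x) ∧
  (AlmostIncreasing Ψ ∨ AlmostDecreasing Ψ) ∧
  ∃ C : ℝ, 1 ≤ C ∧ ∀ x : ℝ, 0 ≤ x → C⁻¹ * Ψ (x ^ 2) ≤ Ψ x ∧ Ψ x ≤ C * Ψ (x ^ 2)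

/-- The pseudohyperbolic distance. -/
def pseudoDist (a z : ℂ) : ℝ := ‖(a - z) / (1 - (starRingEnd ℂ) a * z)‖

/-- The pseudohyperbolic disk `Δ(a, r)`. -/
def pseudoDisk (a : ℂ) (r : ℝ) : Set ℂ := {z ∈ unitDisk | pseudoDist a z < r}

/-- The Carleson square `S(a)`. -/
def carlesonSq (a : ℂ) : Set ℂ :=
  if a = 0 then unitDisk else
    {z ∈ unitDisk | ‖a‖ ≤ ‖z‖ ∧
      |Complex.arg (a * Complex.exp (-((Complex.arg z : ℂ)) * Complex.I))| ≤ (1 - ‖a‖) / 2}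

/-- `ω(E) = ∫_E ω dA`. -/
def wInt (ω : ℂ → ℝ) (E : Set ℂ) : ℝ := ∫ z in E, ω z ∂areaM

/-- `μ` is a `(q,Φ)`-Carleson measure for `A^p_{ω,Ψ}`. -/
def IsCarleson (q : ℝ) (Φ : ℝ → ℝ) (p : ℝ) (Ψ : ℝ → ℝ) (ω : ℂ → ℝ) (μ : Measure ℂ) : Prop :=
  ∀ M > (0 : ℝ), ∃ C > (0 : ℝ), ∀ f : ℂ → ℂ, AnalyticOnNhd ℂ f unitDisk →
    (∫⁻ z in unitDisk, ENNReal.ofReal (‖f z‖ ^ p * Ψ ‖f z‖) ∂areaM) ≤ ENNReal.ofReal M →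
    (∫⁻ z in unitDisk, ENNReal.ofReal (‖f z‖ ^ q * Φ ‖f z‖) ∂μ) ≤ ENNReal.ofReal C

/-- The integrand `Υ^{μ,ω}_{Φ,Ψ,r}(z)^{p/(p-q)} · ω̂(z)/(1-|z|)`. -/
def UpsilonInt (μ : Measure ℂ) (ω : ℂ → ℝ) (Φ Ψ : ℝ → ℝ) (p q r : ℝ) (z : ℂ) : ℝ :=
  ((μ (pseudoDisk z r)).toReal * Φ (1 / (1 - ‖z‖)) /
      (wInt ω (carlesonSq z) * Ψ (1 / (1 - ‖z‖)) ^ (q / p))) ^ (p / (p - q)) *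
    (omHat ω ‖z‖ / (1 - ‖z‖))

/-- The integrand for the differentiation operator, with the extra factor `(1-|z|)^{nq}`. -/
def UpsilonIntN (n : ℕ) (μ : Measure ℂ) (ω : ℂ → ℝ) (Φ Ψ : ℝ → ℝ) (p q r : ℝ) (z : ℂ) : ℝ :=
  ((μ (pseudoDisk z r)).toReal * Φ (1 / (1 - ‖z‖)) /
      (wInt ω (carlesonSq z) * Ψ (1 / (1 - ‖z‖)) ^ (q / p) * (1 - ‖z‖) ^ ((n : ℝ) * q))) ^
      (p / (p - q)) *
    (omHat ω ‖z‖ / (1 - ‖z‖))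

end

/-!
The lower doubling condition makes `ω̂(1 - K⁻ⁿ)` decay like `C⁻ⁿ`, so summing over the annuli
`K⁻ⁿ⁻¹ < 1 - |z| ≤ K⁻ⁿ` shows that `(1 - |z|) ^ (-ε) ω(z)` is integrable as soon as `K ^ ε < C`.
Iterating `Ψ(x²) ≤ A Ψ(x)` shows that `Ψ` grows more slowly than every positive power, so a function
of growth `(1 - |z|) ^ (-δ)` has `|f| ^ p Ψ(|f|) ≲ (1 - |z|) ^ (-ε)` for every `ε > δ p`.
-/

open Set
open scoped ENNReal

section Growth

/-- `Ψ` is dominated at infinity by every positive power. The base `max 1 x` turns this into an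
estimate on all of `[0, ∞)`, so that it includes local boundedness from above. -/
def SubpolynomialGrowth (Ψ : ℝ → ℝ) : Prop :=
  ∀ a > (0 : ℝ), ∃ B ≥ 0, ∀ x ≥ 0, Ψ x ≤ B * max 1 x ^ a

variable {Ψ : ℝ → ℝ}

lemma le_mul_max_one_rpow_of_sq_le {C R B a : ℝ} (ha : 0 ≤ a) (hC : 0 ≤ C) (hR : 1 ≤ R)
    (hCR : C ≤ R ^ a) (hsq : ∀ x ≥ 0, Ψ (x ^ 2) ≤ C * Ψ x) (hB : 0 ≤ B)
    (hΨB : ∀ x ∈ Icc 0 (R ^ 2), Ψ x ≤ B) (n : ℕ) {x : ℝ} (hx : 0 ≤ x) (hxn : x ≤ R ^ 2 ^ n) :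
    Ψ x ≤ B * max 1 x ^ a := by
  have of_le_sq {x : ℝ} (hx : 0 ≤ x) (hxR : x ≤ R ^ 2) : Ψ x ≤ B * max 1 x ^ a :=
    (hΨB x ⟨hx, hxR⟩).trans
      (le_mul_of_one_le_right hB (Real.one_le_rpow (le_max_left 1 x) ha))
  induction n generalizing x with
  | zero => exact of_le_sq hx (hxn.trans (pow_le_pow_right₀ hR (by norm_num)))
  | succ n ih =>
    rcases le_total x (R ^ 2) with hxR | hRx
    · exact of_le_sq hx hxR
    obtain ⟨y, hy, rfl⟩ : ∃ y ≥ 0, y ^ 2 = x := ⟨√x, Real.sqrt_nonneg x, Real.sq_sqrt hx⟩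
    have hRy : R ≤ y := le_of_sq_le_sq hRx hy
    have hyn : y ≤ R ^ 2 ^ n := le_of_sq_le_sq (by rwa [← pow_mul, ← pow_succ]) (by positivity)
    have hCy : C ≤ y ^ a := hCR.trans (Real.rpow_le_rpow (by positivity) hRy ha)
    have ih_y : Ψ y ≤ B * y ^ a := by simpa only [max_eq_right (hR.trans hRy)] using ih hy hyn
    calc Ψ (y ^ 2) ≤ C * Ψ y := hsq y hy
      _ ≤ C * (B * y ^ a) := by gcongr
      _ ≤ y ^ a * (B * y ^ a) := by gcongr
      _ = B * (y ^ 2) ^ a := by rw [sq, Real.mul_rpow hy hy]; ring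
      _ ≤ B * max 1 (y ^ 2) ^ a := by gcongr; exact le_max_right _ _

theorem subpolynomialGrowth_of_sq_le {C : ℝ} (hC : 0 ≤ C)
    (hbdd : ∀ R, BddAbove (Ψ '' Icc 0 R)) (hsq : ∀ x ≥ 0, Ψ (x ^ 2) ≤ C * Ψ x) :
    SubpolynomialGrowth Ψ := by
  intro a ha
  set R := max 2 (C ^ a⁻¹)
  have hR : 1 < R := one_lt_two.trans_le (le_max_left _ _)
  have hCR : C ≤ R ^ a := by
    rw [← Real.rpow_inv_le_iff_of_pos hC (by positivity) ha]
    exact le_max_right _ _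
  obtain ⟨M, hM⟩ := hbdd (R ^ 2)
  refine ⟨max M 0, le_max_right _ _, fun x hx ↦ ?_⟩
  obtain ⟨n, hn⟩ := pow_unbounded_of_one_lt x hR
  exact le_mul_max_one_rpow_of_sq_le ha.le hC hR.le hCR hsq (le_max_right _ _)
    (fun y hy ↦ (hM (mem_image_of_mem Ψ hy)).trans (le_max_left _ _)) n hx
    (hn.le.trans (pow_le_pow_right₀ hR.le n.lt_two_pow_self.le))

lemma AlmostIncreasing.bddAbove_image_Icc (h : AlmostIncreasing Ψ) (R : ℝ) :
    BddAbove (Ψ '' Icc 0 R) := by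
  obtain ⟨C, -, hC⟩ := h
  exact ⟨C * Ψ R, forall_mem_image.2 fun x hx ↦ hC x R hx.1 hx.2⟩

lemma AlmostDecreasing.bddAbove_image_Icc (h : AlmostDecreasing Ψ) (R : ℝ) :
    BddAbove (Ψ '' Icc 0 R) := by
  obtain ⟨C, -, hC⟩ := h
  exact ⟨C * Ψ 0, forall_mem_image.2 fun x hx ↦ hC 0 x le_rfl hx.1⟩

theorem InClassL.subpolynomialGrowth (h : InClassL Ψ) : SubpolynomialGrowth Ψ := by
  obtain ⟨-, hmono, C, hC, hsq⟩ := h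
  have hC₀ : 0 < C := one_pos.trans_le hC
  exact subpolynomialGrowth_of_sq_le hC₀.le
    (fun R ↦ hmono.elim (·.bddAbove_image_Icc R) (·.bddAbove_image_Icc R))
    fun x hx ↦ (inv_mul_le_iff₀ hC₀).1 (hsq x hx).1

lemma rpow_mul_le_mul_rpow_neg {p a B x y C₀ t δ : ℝ} (hp : 0 ≤ p) (ha : 0 ≤ a) (hB : 0 ≤ B)
    (hδ : 0 ≤ δ) (hx : 0 ≤ x) (ht : t ∈ Ioc 0 1) (hy : y ≤ B * max 1 x ^ a)
    (hxt : x ≤ C₀ * t ^ (-δ)) :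
    x ^ p * y ≤ B * max 1 C₀ ^ (p + a) * t ^ (-(δ * (p + a))) := by
  have one_le : 1 ≤ t ^ (-δ) :=
    Real.one_le_rpow_of_pos_of_le_one_of_nonpos ht.1 ht.2 (neg_nonpos.2 hδ)
  have hmax : max 1 x ≤ max 1 C₀ * t ^ (-δ) := by
    rw [max_mul_of_nonneg _ _ (by positivity), one_mul]
    exact max_le_max one_le hxt
  calc x ^ p * y ≤ x ^ p * (B * max 1 x ^ a) := by gcongr
    _ ≤ max 1 x ^ p * (B * max 1 x ^ a) := by
        gcongr
        exact le_max_right 1 x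
    _ = B * max 1 x ^ (p + a) := by rw [Real.rpow_add (by positivity)]; ring
    _ ≤ B * (max 1 C₀ * t ^ (-δ)) ^ (p + a) := by gcongr
    _ = B * max 1 C₀ ^ (p + a) * t ^ (-(δ * (p + a))) := by
        have := ht.1
        rw [Real.mul_rpow (by positivity) (by positivity), ← Real.rpow_mul ht.1.le, neg_mul,
          mul_assoc]

end Growth

section GeometricDecay

variable {α : Type*} [MeasurableSpace α] {μ : Measure α} {t : α → ℝ} {K ε : ℝ} {c : ℝ≥0∞}

lemma measure_le_inv_pow_le (hK : 1 ≤ K)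
    (h : ∀ ρ ∈ Ioc (0 : ℝ) 1, μ {x | t x ≤ ρ / K} ≤ c * μ {x | t x ≤ ρ}) (n : ℕ) :
    μ {x | t x ≤ K⁻¹ ^ n} ≤ c ^ n * μ univ := by
  induction n with
  | zero => simpa only [pow_zero, one_mul] using measure_mono (subset_univ _)
  | succ n ih =>
    have hmem : K⁻¹ ^ n ∈ Ioc (0 : ℝ) 1 :=
      ⟨by positivity, pow_le_one₀ (by positivity) (inv_le_one_of_one_le₀ hK)⟩
    calc μ {x | t x ≤ K⁻¹ ^ (n + 1)} = μ {x | t x ≤ K⁻¹ ^ n / K} := by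
          rw [pow_succ, div_eq_mul_inv]
      _ ≤ c * μ {x | t x ≤ K⁻¹ ^ n} := h _ hmem
      _ ≤ c * (c ^ n * μ univ) := by gcongr
      _ = c ^ (n + 1) * μ univ := by rw [pow_succ', mul_assoc]

lemma rpow_neg_le_pow_of_inv_pow_le {s : ℝ} (hK : 0 < K) (hε : 0 ≤ ε) {n : ℕ}
    (hs : K⁻¹ ^ n ≤ s) : s ^ (-ε) ≤ (K ^ ε) ^ n :=
  calc s ^ (-ε) ≤ (K⁻¹ ^ n) ^ (-ε) :=
        Real.rpow_le_rpow_of_nonpos (by positivity) hs (neg_nonpos.2 hε)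
    _ = (K ^ ε) ^ n := by
        rw [inv_pow, Real.inv_rpow (by positivity), ← Real.rpow_neg (by positivity), neg_neg,
          ← Real.rpow_pow_comm hK.le]

lemma setLIntegral_rpow_neg_le (hK : 1 ≤ K)
    (h : ∀ ρ ∈ Ioc (0 : ℝ) 1, μ {x | t x ≤ ρ / K} ≤ c * μ {x | t x ≤ ρ}) (hε : 0 ≤ ε) (n : ℕ) :
    ∫⁻ x in t ⁻¹' Ioc (K⁻¹ ^ (n + 1)) (K⁻¹ ^ n), ENNReal.ofReal (t x ^ (-ε)) ∂μ ≤
      ENNReal.ofReal (K ^ ε) * μ univ * (ENNReal.ofReal (K ^ ε) * c) ^ n := by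
  have hK₀ : 0 < K := by positivity
  calc ∫⁻ x in t ⁻¹' Ioc (K⁻¹ ^ (n + 1)) (K⁻¹ ^ n), ENNReal.ofReal (t x ^ (-ε)) ∂μ
      ≤ ∫⁻ _ in t ⁻¹' Ioc (K⁻¹ ^ (n + 1)) (K⁻¹ ^ n), ENNReal.ofReal ((K ^ ε) ^ (n + 1)) ∂μ :=
        setLIntegral_mono measurable_const fun x hx ↦
          ENNReal.ofReal_le_ofReal (rpow_neg_le_pow_of_inv_pow_le hK₀ hε hx.1.le)
    _ ≤ ENNReal.ofReal ((K ^ ε) ^ (n + 1)) * μ {x | t x ≤ K⁻¹ ^ n} := by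
        rw [setLIntegral_const]
        gcongr
        exact fun x hx ↦ hx.2
    _ ≤ ENNReal.ofReal ((K ^ ε) ^ (n + 1)) * (c ^ n * μ univ) := by
        gcongr
        exact measure_le_inv_pow_le hK h n
    _ = ENNReal.ofReal (K ^ ε) * μ univ * (ENNReal.ofReal (K ^ ε) * c) ^ n := by
        rw [ENNReal.ofReal_pow (by positivity), pow_succ, mul_pow]
        ring

theorem lintegral_rpow_neg_lt_top_of_measure_le [IsFiniteMeasure μ]
    (ht : ∀ᵐ x ∂μ, t x ∈ Ioc 0 1) (hK : 1 < K)
    (h : ∀ ρ ∈ Ioc (0 : ℝ) 1, μ {x | t x ≤ ρ / K} ≤ c * μ {x | t x ≤ ρ}) (hε : 0 ≤ ε)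
    (hc : ENNReal.ofReal (K ^ ε) * c < 1) :
    ∫⁻ x, ENNReal.ofReal (t x ^ (-ε)) ∂μ < ∞ := by
  set S : ℕ → Set α := fun n ↦ t ⁻¹' Ioc (K⁻¹ ^ (n + 1)) (K⁻¹ ^ n)
  have hcover : ∀ᵐ x ∂μ, x ∈ ⋃ n, S n := by
    filter_upwards [ht] with x hx
    exact mem_iUnion.2 (exists_nat_pow_near_of_lt_one hx.1 hx.2 (by positivity)
      (inv_lt_one_of_one_lt₀ hK))
  calc ∫⁻ x, ENNReal.ofReal (t x ^ (-ε)) ∂μ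
      = ∫⁻ x in ⋃ n, S n, ENNReal.ofReal (t x ^ (-ε)) ∂μ := by
        rw [Measure.restrict_eq_self_of_ae_mem hcover]
    _ ≤ ∑' n, ∫⁻ x in S n, ENNReal.ofReal (t x ^ (-ε)) ∂μ := lintegral_iUnion_le _ _
    _ ≤ ∑' n, ENNReal.ofReal (K ^ ε) * μ univ * (ENNReal.ofReal (K ^ ε) * c) ^ n :=
        ENNReal.tsum_le_tsum (setLIntegral_rpow_neg_le hK.le h hε)
    _ < ∞ := by
        rw [ENNReal.tsum_mul_left, ENNReal.tsum_geometric]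
        exact ENNReal.mul_lt_top (ENNReal.mul_lt_top ENNReal.ofReal_lt_top (measure_lt_top μ _))
          (ENNReal.inv_lt_top.2 (tsub_pos_of_lt hc))

end GeometricDecay

section Weight

variable {v : ℝ → ℝ} {C K ε : ℝ}

lemma withDensity_restrict_Ioo_one_sub_le (hv : ∀ s ∈ Ioo 0 1, 0 ≤ v s)
    (hint : IntegrableOn v (Ioo 0 1)) {ρ : ℝ} (hρ : ρ ≤ 1) :
    (volume.restrict (Ioo 0 1)).withDensity (fun s ↦ ENNReal.ofReal (v s)) {s | 1 - s ≤ ρ} =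
      ENNReal.ofReal (∫ s in Ioo (1 - ρ) 1, v s) := by
  have hsub : Ioo (1 - ρ) 1 ⊆ Ioo 0 1 := Ioo_subset_Ioo_left (sub_nonneg.2 hρ)
  have hset : {s | 1 - s ≤ ρ} = Ici (1 - ρ) := Set.ext fun s ↦ sub_le_comm (a := 1) (b := s)
  have hae : (Ici (1 - ρ) ∩ Ioo 0 1 : Set ℝ) =ᵐ[volume] Ioo (1 - ρ) 1 := by
    have hinter : Ioi (1 - ρ) ∩ Ioo 0 1 = Ioo (1 - ρ) 1 := by
      rw [inter_comm, Ioo_inter_Ioi, max_eq_right (sub_nonneg.2 hρ)]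
    simpa only [hinter] using (Ioi_ae_eq_Ici (a := 1 - ρ)).symm.inter (ae_eq_refl (Ioo 0 1))
  rw [hset, withDensity_apply _ measurableSet_Ici, Measure.restrict_restrict measurableSet_Ici,
    setLIntegral_congr hae, ofReal_integral_eq_lintegral_ofReal (hint.mono_set hsub)]
  filter_upwards [ae_restrict_mem measurableSet_Ioo] with s hs using hv s (hsub hs)

theorem integrableOn_one_sub_rpow_neg_mul (hv : ∀ s ∈ Ioo 0 1, 0 ≤ v s)
    (hint : IntegrableOn v (Ioo 0 1)) (hK : 1 < K)
    (h : ∀ r, 0 ≤ r → r < 1 → C * ∫ s in Ioo (1 - (1 - r) / K) 1, v s ≤ ∫ s in Ioo r 1, v s)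
    (hε : 0 ≤ ε) (hKε : K ^ ε < C) :
    IntegrableOn (fun s ↦ (1 - s) ^ (-ε) * v s) (Ioo 0 1) := by
  have hC : 0 < C := (by positivity : 0 < K ^ ε).trans hKε
  set ν := volume.restrict (Ioo (0 : ℝ) 1)
  set μ := ν.withDensity fun s ↦ ENNReal.ofReal (v s)
  have : IsFiniteMeasure μ := isFiniteMeasure_withDensity_ofReal hint.hasFiniteIntegral
  have hν : ∀ᵐ s ∂ν, s ∈ Ioo 0 1 := ae_restrict_mem measurableSet_Ioo
  have hμ : ∀ᵐ s ∂μ, 1 - s ∈ Ioc 0 1 := by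
    filter_upwards [(withDensity_absolutelyContinuous ν _).ae_le hν] with s hs
    exact ⟨sub_pos.2 hs.2, by linarith [hs.1]⟩
  have hdecay : ∀ ρ ∈ Ioc (0 : ℝ) 1,
      μ {s | 1 - s ≤ ρ / K} ≤ ENNReal.ofReal C⁻¹ * μ {s | 1 - s ≤ ρ} := fun ρ hρ ↦ by
    rw [withDensity_restrict_Ioo_one_sub_le hv hint (div_le_one_of_le₀ (hρ.2.trans hK.le)
        (by positivity)), withDensity_restrict_Ioo_one_sub_le hv hint hρ.2,
      ← ENNReal.ofReal_mul (by positivity)]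
    refine ENNReal.ofReal_le_ofReal ((le_inv_mul_iff₀ hC).2 ?_)
    simpa only [sub_sub_cancel] using h (1 - ρ) (sub_nonneg.2 hρ.2) (sub_lt_self 1 hρ.1)
  have hratio : ENNReal.ofReal (K ^ ε) * ENNReal.ofReal C⁻¹ < 1 := by
    rw [← ENNReal.ofReal_mul (by positivity), ENNReal.ofReal_lt_one, ← div_eq_mul_inv]
    exact (div_lt_one hC).2 hKε
  have hmeas : Measurable fun s : ℝ ↦ (1 - s) ^ (-ε) := by fun_prop
  have hnonneg : 0 ≤ᵐ[ν] fun s ↦ (1 - s) ^ (-ε) * v s := by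
    filter_upwards [hν] with s hs
    exact mul_nonneg (Real.rpow_nonneg (sub_nonneg.2 hs.2.le) _) (hv s hs)
  refine ⟨hmeas.aestronglyMeasurable.mul hint.aestronglyMeasurable,
    (hasFiniteIntegral_iff_ofReal hnonneg).2 ?_⟩
  calc ∫⁻ s, ENNReal.ofReal ((1 - s) ^ (-ε) * v s) ∂ν
      = ∫⁻ s, ENNReal.ofReal ((1 - s) ^ (-ε)) ∂μ := by
        rw [lintegral_withDensity_eq_lintegral_mul₀
          hint.aestronglyMeasurable.aemeasurable.ennreal_ofReal
          hmeas.ennreal_ofReal.aemeasurable]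
        refine lintegral_congr_ae ?_
        filter_upwards [hν] with s hs
        rw [Pi.mul_apply, ← ENNReal.ofReal_mul (hv s hs), mul_comm]
    _ < ∞ := lintegral_rpow_neg_lt_top_of_measure_le hμ hK hdecay hε hratio

end Weight

section Disk

lemma unitDisk_eq_ball : unitDisk = Metric.ball 0 1 := by
  ext z
  exact mem_ball_zero_iff.symm

lemma measurableSet_unitDisk : MeasurableSet unitDisk :=
  unitDisk_eq_ball ▸ measurableSet_ball

theorem integrableOn_unitDisk_comp_norm {g : ℝ → ℝ} (hg : IntegrableOn g (Ioo 0 1)) :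
    IntegrableOn (fun z ↦ g ‖z‖) unitDisk areaM := by
  have hpolar : IntegrableOn (fun r ↦ r ^ (Module.finrank ℝ ℂ - 1) • g r) (Ioo 0 1) := by
    refine Integrable.bdd_mul (c := 1) hg (by fun_prop) ?_
    filter_upwards [ae_restrict_mem measurableSet_Ioo] with r hr
    rw [norm_pow, Real.norm_of_nonneg hr.1.le]
    exact pow_le_one₀ hr.1.le hr.2.le
  rw [IntegrableOn, areaM, Measure.restrict_smul, unitDisk_eq_ball]
  exact ((integrableOn_fun_norm_addHaar volume).2 hpolar).smul_measure (by simp [Real.pi_pos])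

variable {ω : ℂ → ℝ} {C K : ℝ}

lemma OmHatPos.integrableOn_Ioo (hpos : OmHatPos ω) :
    IntegrableOn (fun s : ℝ ↦ ω s) (Ioo 0 1) :=
  not_not.1 fun h ↦ (hpos 0 le_rfl one_pos).ne' (integral_undef h)

theorem integrableOn_unitDisk_rpow_neg_mul (hω : ∀ z ∈ unitDisk, 0 ≤ ω z) (hrad : IsRadial ω)
    (hint : IntegrableOn (fun s : ℝ ↦ ω s) (Ioo 0 1)) (hK : 1 < K)
    (h : ∀ r, 0 ≤ r → r < 1 → C * omHat ω (1 - (1 - r) / K) ≤ omHat ω r)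
    {ε : ℝ} (hε : 0 ≤ ε) (hKε : K ^ ε < C) :
    IntegrableOn (fun z ↦ (1 - ‖z‖) ^ (-ε) * ω z) unitDisk areaM := by
  have hv : ∀ s ∈ Ioo (0 : ℝ) 1, 0 ≤ ω s := fun s hs ↦ hω s <| by
    simpa [unitDisk, abs_of_pos hs.1] using hs.2
  have hnorm (z : ℂ) : ω ‖z‖ = ω z := hrad _ _ (by simp)
  simpa only [hnorm] using
    integrableOn_unitDisk_comp_norm (integrableOn_one_sub_rpow_neg_mul hv hint hK h hε hKε)

theorem slow_growth_in_bergman_zygmund_general {E : Type*} [SeminormedAddCommGroup E] {p : ℝ}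
    (hp : 0 ≤ p) {Ψ : ℝ → ℝ} (hΨ : SubpolynomialGrowth Ψ) (hω : ∀ z ∈ unitDisk, 0 ≤ ω z)
    (hrad : IsRadial ω) (hint : IntegrableOn (fun s : ℝ ↦ ω s) (Ioo 0 1)) (hK : 1 < K)
    (h : ∀ r, 0 ≤ r → r < 1 → C * omHat ω (1 - (1 - r) / K) ≤ omHat ω r)
    {δ : ℝ} (hδ : 0 ≤ δ) (hKδ : K ^ (δ * p) < C) {f : ℂ → E} {C₀ : ℝ}
    (hf : ∀ z ∈ unitDisk, ‖f z‖ ≤ C₀ * (1 - ‖z‖) ^ (-δ)) :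
    ∫⁻ z in unitDisk, ENNReal.ofReal (‖f z‖ ^ p * Ψ ‖f z‖ * ω z) ∂areaM < ∞ := by
  have hC : 0 < C := (by positivity : 0 < K ^ (δ * p)).trans hKδ
  obtain ⟨a, ha, hδa⟩ :=
    exists_pos_mul_lt (sub_pos.2 ((Real.lt_logb_iff_rpow_lt hK hC).2 hKδ)) δ
  have hKε : K ^ (δ * (p + a)) < C := (Real.lt_logb_iff_rpow_lt hK hC).1 (by linarith)
  obtain ⟨B, hB, hΨB⟩ := hΨ a ha
  have hbound : ∀ z ∈ unitDisk, ‖f z‖ ^ p * Ψ ‖f z‖ * ω z ≤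
      B * max 1 C₀ ^ (p + a) * ((1 - ‖z‖) ^ (-(δ * (p + a))) * ω z) := fun z hz ↦ by
    rw [← mul_assoc]
    exact mul_le_mul_of_nonneg_right (rpow_mul_le_mul_rpow_neg hp ha.le hB hδ (norm_nonneg _)
      ⟨sub_pos.2 hz, sub_le_self 1 (norm_nonneg z)⟩ (hΨB _ (norm_nonneg _)) (hf z hz)) (hω z hz)
  refine (setLIntegral_mono' measurableSet_unitDisk fun z hz ↦
    ENNReal.ofReal_le_ofReal (hbound z hz)).trans_lt (Integrable.lintegral_lt_top ?_)
  exact (integrableOn_unitDisk_rpow_neg_mul hω hrad hint hK h (by positivity) hKε).const_mul _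

end Disk

theorem slow_growth_in_bergman_zygmund (p : ℝ) (hp : 0 < p)
    (Ψ : ℝ → ℝ) (hΨ : InClassL Ψ)
    (ω : ℂ → ℝ) (hw : IsWeight ω) (hrad : IsRadial ω) (hpos : OmHatPos ω)
    (hD : DoublingD ω) :
    ∃ δ₁ > (0 : ℝ), ∀ δ : ℝ, 0 < δ → δ < δ₁ →
      ∀ f : ℂ → ℂ, AnalyticOnNhd ℂ f unitDisk →
      ∀ C₀ > (0 : ℝ), (∀ z ∈ unitDisk, ‖f z‖ ≤ C₀ * (1 - ‖z‖) ^ (-δ)) →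
      (∫⁻ z in unitDisk, ENNReal.ofReal (‖f z‖ ^ p * Ψ ‖f z‖ * ω z) ∂areaM) < ⊤ := by
  obtain ⟨-, C, hC, K, hK, h⟩ := hD
  refine ⟨Real.logb K C / p, div_pos (Real.logb_pos hK hC) hp, fun δ hδ hδ₁ f _ C₀ _ hf ↦ ?_⟩
  have hKδ : K ^ (δ * p) < C :=
    (Real.lt_logb_iff_rpow_lt hK (by positivity)).1 ((lt_div_iff₀ hp).1 hδ₁)
  exact slow_growth_in_bergman_zygmund_general hp.le hΨ.subpolynomialGrowth hw.1 hrad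
    hpos.integrableOn_Ioo hK h hδ.le hKδ hf
end

section
/- Let ω be a radial weight on 𝔻. Then ω ∈ Ď if and only if there exist constants C > 0 and α > 0 such that ω̂(t) ≤ C·((1−t)/(1−r))^α·ω̂(r) for all 0 ≤ r ≤ t < 1. -/
open MeasureTheory Complex Filter

/-!
In terms of the distance `x = 1 - r` to the boundary, `g x = ω̂ (1 - x)` is a nonnegative monotone
function on `(0, 1]`, and `ω ∈ Ď` says that `C * g (x / K) ≤ g x`. Iterating gives
`C ^ n * g (x / K ^ n) ≤ g x`; choosing `n` with `K ^ n ≤ x / y < K ^ (n + 1)` turns this into a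
power bound with exponent `α = log C / log K`. Conversely, a power bound at `y = x / K` gives
`g x ≥ 2 * g (x / K)` as soon as `K ^ α ≥ 2 * C`.
-/

open Set

section Dilation

variable {g : ℝ → ℝ} {C K L x y : ℝ}

theorem pow_mul_comp_div_pow_le (hC : 0 ≤ C) (hK : 1 ≤ K)
    (h : ∀ x ∈ Ioc 0 L, C * g (x / K) ≤ g x) (hx : x ∈ Ioc 0 L) (n : ℕ) :
    C ^ n * g (x / K ^ n) ≤ g x := by
  induction n with
  | zero => simp
  | succ n ih =>
    have hmem : x / K ^ n ∈ Ioc 0 L :=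
      ⟨div_pos hx.1 (by positivity), (div_le_self hx.1.le (one_le_pow₀ hK)).trans hx.2⟩
    calc C ^ (n + 1) * g (x / K ^ (n + 1))
        = C ^ n * (C * g (x / K ^ n / K)) := by rw [div_div, ← pow_succ, pow_succ C, mul_assoc]
      _ ≤ C ^ n * g (x / K ^ n) := by gcongr; exact h _ hmem
      _ ≤ g x := ih

theorem inv_pow_le_rpow_logb (hC : 1 ≤ C) (hK : 1 < K) {n : ℕ} (hx : (K ^ n)⁻¹ ≤ x) :
    (C ^ n)⁻¹ ≤ x ^ Real.logb K C := by
  have hK0 : 0 < K := one_pos.trans hK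
  calc (C ^ n)⁻¹ = ((K ^ n)⁻¹) ^ Real.logb K C := by
        rw [Real.inv_rpow (by positivity), ← Real.rpow_pow_comm hK0.le,
          Real.rpow_logb hK0 hK.ne' (one_pos.trans_le hC)]
    _ ≤ x ^ Real.logb K C :=
        Real.rpow_le_rpow (by positivity) hx (Real.logb_nonneg hK hC)

theorem le_mul_rpow_logb_mul_of_mul_comp_div_le (hC : 1 ≤ C) (hK : 1 < K)
    (hg : MonotoneOn g (Ioc 0 L)) (h : ∀ x ∈ Ioc 0 L, C * g (x / K) ≤ g x)
    (hy : 0 < y) (hyx : y ≤ x) (hx : x ≤ L) (hgx : 0 ≤ g x) :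
    g y ≤ C * (y / x) ^ Real.logb K C * g x := by
  have hx₀ : 0 < x := hy.trans_le hyx
  have hC₀ : 0 < C := one_pos.trans_le hC
  obtain ⟨n, hn, hn'⟩ := exists_nat_pow_near ((one_le_div hy).2 hyx) hK
  have hKn : 0 < K ^ n := by positivity
  have hy_le : y ≤ x / K ^ n := (le_div_comm₀ hKn hy).1 hn
  have hxn : x / K ^ n ≤ L := (div_le_self hx₀.le (one_le_pow₀ hK.le)).trans hx
  have hratio : (K ^ (n + 1))⁻¹ ≤ y / x := by
    simpa using inv_anti₀ (div_pos hx₀ hy) hn'.le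
  calc g y ≤ g (x / K ^ n) := hg ⟨hy, hyx.trans hx⟩ ⟨hy.trans_le hy_le, hxn⟩ hy_le
    _ ≤ g x / C ^ n :=
        (le_div_iff₀' (by positivity)).2 (pow_mul_comp_div_pow_le hC₀.le hK.le h ⟨hx₀, hx⟩ n)
    _ = C * (C ^ (n + 1))⁻¹ * g x := by rw [pow_succ]; field_simp
    _ ≤ C * (y / x) ^ Real.logb K C * g x := by
        gcongr
        exact inv_pow_le_rpow_logb hC hK hratio

theorem mul_comp_div_le_of_le_mul_rpow_mul {M α : ℝ} (hM : 0 ≤ M) (hK : 0 < K)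
    (hMC : M * C ≤ K ^ α) (hx : 0 < x) (hgx : 0 ≤ g x)
    (h : g (x / K) ≤ C * (x / K / x) ^ α * g x) : M * g (x / K) ≤ g x := by
  have hKα : 0 < K ^ α := Real.rpow_pos_of_pos hK α
  calc M * g (x / K) ≤ M * (C * (x / K / x) ^ α * g x) := by gcongr
    _ = M * C / K ^ α * g x := by
        rw [div_right_comm, div_self hx.ne', one_div, Real.inv_rpow hK.le]; ring
    _ ≤ g x := mul_le_of_le_one_left hgx ((div_le_one hKα).2 hMC)

end Dilation

theorem exists_one_lt_le_rpow {α : ℝ} (hα : 0 < α) (M : ℝ) : ∃ K > (1 : ℝ), M ≤ K ^ α :=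
  ((eventually_gt_atTop 1).and ((tendsto_rpow_atTop hα).eventually_ge_atTop M)).exists

theorem antitoneOn_setIntegral_Ioo {μ : Measure ℝ} {φ : ℝ → ℝ} {a b : ℝ}
    (hφ : IntegrableOn φ (Ioo a b) μ) (hφ₀ : ∀ s ∈ Ioo a b, 0 ≤ φ s) :
    AntitoneOn (fun r => ∫ s in Ioo r b, φ s ∂μ) (Ici a) := by
  intro r hr t _ hrt
  have hsub : Ioo r b ⊆ Ioo a b := Ioo_subset_Ioo_left hr
  exact setIntegral_mono_set (hφ.mono_set hsub)
    (ae_restrict_of_forall_mem measurableSet_Ioo fun s hs => hφ₀ s (hsub hs))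
    (Ioo_subset_Ioo_left hrt).eventuallyLE

theorem antitoneOn_omHat {ω : ℂ → ℝ} (hω : ∀ z ∈ unitDisk, 0 ≤ ω z) (h₀ : omHat ω 0 ≠ 0) :
    AntitoneOn (omHat ω) (Ici 0) :=
  antitoneOn_setIntegral_Ioo (Integrable.of_integral_ne_zero h₀) fun s hs =>
    hω s (by simpa [unitDisk, abs_of_pos hs.1] using hs.2)

theorem Dcheck_characterization_general {f : ℝ → ℝ} {a b : ℝ}
    (hf : AntitoneOn f (Ico a b)) (hf₀ : ∀ r ∈ Ico a b, 0 ≤ f r) :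
    (∃ C > (1 : ℝ), ∃ K > (1 : ℝ), ∀ r : ℝ, a ≤ r → r < b →
      f r ≥ C * f (b - (b - r) / K)) ↔
    ∃ C > (0 : ℝ), ∃ α > (0 : ℝ), ∀ r t : ℝ, a ≤ r → r ≤ t → t < b →
      f t ≤ C * ((b - t) / (b - r)) ^ α * f r := by
  let g : ℝ → ℝ := fun x => f (b - x)
  have hmem : ∀ x ∈ Ioc 0 (b - a), b - x ∈ Ico a b := fun x hx =>
    ⟨le_sub_comm.1 hx.2, sub_lt_self b hx.1⟩
  have hg : MonotoneOn g (Ioc 0 (b - a)) := fun x hx y hy hxy =>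
    hf (hmem y hy) (hmem x hx) (sub_le_sub_left hxy b)
  constructor
  · rintro ⟨C, hC, K, hK, h⟩
    refine ⟨C, one_pos.trans hC, Real.logb K C, Real.logb_pos hK hC, fun r t hr hrt ht => ?_⟩
    have hdil : ∀ x ∈ Ioc 0 (b - a), C * g (x / K) ≤ g x := fun x hx => by
      simpa [g] using h (b - x) (hmem x hx).1 (hmem x hx).2
    have hgx : 0 ≤ g (b - r) := by simpa [g] using hf₀ r ⟨hr, hrt.trans_lt ht⟩
    simpa [g] using le_mul_rpow_logb_mul_of_mul_comp_div_le hC.le hK hg hdil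
      (sub_pos.2 ht) (sub_le_sub_left hrt b) (sub_le_sub_left hr b) hgx
  · rintro ⟨C, -, α, hα, h⟩
    obtain ⟨K, hK, hKα⟩ := exists_one_lt_le_rpow hα (2 * C)
    refine ⟨2, one_lt_two, K, hK, fun r hr hrb => ?_⟩
    have hx : 0 < b - r := sub_pos.2 hrb
    have hpow : g ((b - r) / K) ≤ C * ((b - r) / K / (b - r)) ^ α * g (b - r) := by
      simpa [g] using h r (b - (b - r) / K) hr (le_sub_comm.1 (div_le_self hx.le hK.le))
        (sub_lt_self b (div_pos hx (one_pos.trans hK)))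
    have hgx : 0 ≤ g (b - r) := by simpa [g] using hf₀ r ⟨hr, hrb⟩
    simpa [g] using
      mul_comp_div_le_of_le_mul_rpow_mul zero_le_two (one_pos.trans hK) hKα hx hgx hpow

theorem Dcheck_characterization (ω : ℂ → ℝ)
    (hw : IsWeight ω) (hrad : IsRadial ω) (hpos : OmHatPos ω) :
    Dcheck ω ↔ ∃ C > (0 : ℝ), ∃ α > (0 : ℝ),
      ∀ r t : ℝ, 0 ≤ r → r ≤ t → t < 1 →
        omHat ω t ≤ C * ((1 - t) / (1 - r)) ^ α * omHat ω r :=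
  Dcheck_characterization_general
    ((antitoneOn_omHat hw.1 (hpos 0 le_rfl one_pos).ne').mono Ico_subset_Ici_self)
    fun r hr => (hpos r hr.1 hr.2).le
end

section
/- Let Φ and Ψ belong to the class 𝓛. Then there exists a constant C ≥ 1, depending only on Φ and Ψ, such that C⁻¹·Ψ(x) ≤ Ψ(x/Φ(x)) ≤ C·Ψ(x) for all 0 ≤ x < ∞. -/
open MeasureTheory Complex Filter

/-!
A function `f` that is bounded on bounded intervals and satisfies `f (x ^ 2) ≤ C * f x` grows
more slowly than every power of `x`, since passing from `x` to `x ^ 2` costs only a fixed factor.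
Both `Φ` and `Φ⁻¹` are of this kind, so `x` and `x / Φ x` are bounded by powers of each other, up to
constants. Iterating `Ψ (x ^ 2) ≍ Ψ x`, almost monotonicity shows that `Ψ` takes comparable values
at any two such points.
-/

theorem nonneg_sq_induction {p : ℝ → Prop} {S : ℝ} (hS : 1 < S)
    (base : ∀ x, 0 ≤ x → x ≤ S → p x) (step : ∀ y, 0 ≤ y → S < y ^ 2 → p y → p (y ^ 2)) :
    ∀ x, 0 ≤ x → p x := by
  have below_pow : ∀ (n : ℕ) (x : ℝ), 0 ≤ x → x ≤ S ^ 2 ^ n → p x := by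
    intro n
    induction n with
    | zero => simpa using base
    | succ n ih =>
      intro x hx hxS
      rcases le_or_gt x S with hle | hlt
      · exact base x hx hle
      have hsqrt : √x ≤ S ^ 2 ^ n := by
        rw [Real.sqrt_le_left (by positivity), ← pow_mul, ← pow_succ]
        exact hxS
      have hstep := step (√x) (Real.sqrt_nonneg x)
      rw [Real.sq_sqrt hx] at hstep
      exact hstep hlt (ih _ (Real.sqrt_nonneg x) hsqrt)
  intro x hx
  obtain ⟨n, hn⟩ := pow_unbounded_of_one_lt x hS
  exact below_pow n x hx (hn.le.trans (pow_le_pow_right₀ hS.le Nat.lt_two_pow_self.le))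

theorem exists_le_mul_one_add_rpow_of_sq_le {f : ℝ → ℝ} {C ε : ℝ} (hC : 0 ≤ C) (hε : 0 < ε)
    (hbdd : ∀ T, BddAbove (f '' Set.Icc 0 T)) (hsq : ∀ x, 0 ≤ x → f (x ^ 2) ≤ C * f x) :
    ∃ K, ∀ x, 0 ≤ x → f x ≤ K * (1 + x) ^ ε := by
  set T : ℝ := C ^ ε⁻¹ + 2
  have hT : 2 ≤ T := le_add_of_nonneg_left (by positivity)
  obtain ⟨M, hM⟩ := hbdd (T ^ 2)
  refine ⟨max M 0, nonneg_sq_induction (S := T ^ 2) (by nlinarith) ?_ ?_⟩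
  · intro x hx hxT
    calc f x ≤ max M 0 := (hM (Set.mem_image_of_mem f ⟨hx, hxT⟩)).trans (le_max_left _ _)
      _ ≤ max M 0 * (1 + x) ^ ε :=
        le_mul_of_one_le_right (le_max_right _ _) (Real.one_le_rpow (by linarith) hε.le)
  · intro y hy hTy ih
    have hTy' : T < y := lt_of_pow_lt_pow_left₀ 2 hy hTy
    have hCy : C ≤ (y - 1) ^ ε :=
      (Real.rpow_inv_le_iff_of_pos hC (by linarith) hε).1 (by linarith)
    calc f (y ^ 2) ≤ C * f y := hsq y hy
      _ ≤ C * (max M 0 * (1 + y) ^ ε) := by gcongr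
      _ ≤ (y - 1) ^ ε * (max M 0 * (1 + y) ^ ε) := by gcongr
      _ = max M 0 * ((y - 1) * (1 + y)) ^ ε := by
        rw [Real.mul_rpow (by linarith) (by linarith)]
        ring
      _ ≤ max M 0 * (1 + y ^ 2) ^ ε := by
        gcongr
        · nlinarith
        · nlinarith

theorem div_le_mul_one_add_pow {x t a K : ℝ} (hx : 0 ≤ x) (ht : 0 < t)
    (h : t⁻¹ ≤ K * (1 + x) ^ a) : x / t ≤ K * (1 + x) ^ ⌈1 + a⌉₊ := by
  have hK : 0 ≤ K := nonneg_of_mul_nonneg_left ((inv_pos.2 ht).le.trans h) (by positivity)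
  calc x / t ≤ (1 + x) * (K * (1 + x) ^ a) := by
        rw [div_eq_mul_inv]
        gcongr
        linarith
    _ = K * (1 + x) ^ (1 + a) := by
        rw [Real.rpow_add (by positivity), Real.rpow_one]
        ring
    _ ≤ K * (1 + x) ^ ⌈1 + a⌉₊ := by
        rw [← Real.rpow_natCast]
        gcongr
        · linarith
        · exact Nat.le_ceil _

theorem le_mul_one_add_div_pow {x t b K : ℝ} (hx : 0 ≤ x) (ht : 0 < t) (hb₀ : 0 ≤ b) (hb₁ : b < 1)
    (h : t ≤ K * (1 + x) ^ b) :
    x ≤ (1 + K) ^ ⌈(1 - b)⁻¹⌉₊ * (1 + x / t) ^ ⌈(1 - b)⁻¹⌉₊ := by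
  have hK : 0 ≤ K := nonneg_of_mul_nonneg_left (ht.le.trans h) (by positivity)
  have hu : 0 ≤ x / t := by positivity
  have hpow : 1 ≤ (1 + x) ^ b := Real.one_le_rpow (by linarith) hb₀
  have hlin : 1 + x ≤ (1 + K) * (1 + x / t) * (1 + x) ^ b :=
    calc 1 + x = 1 + x / t * t := by rw [div_mul_cancel₀ x ht.ne']
      _ ≤ (1 + x) ^ b + x / t * (K * (1 + x) ^ b) := by gcongr
      _ = (1 + K * (x / t)) * (1 + x) ^ b := by ring
      _ ≤ (1 + K) * (1 + x / t) * (1 + x) ^ b := by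
        gcongr
        nlinarith
  have hroot : (1 + x) ^ (1 - b) ≤ (1 + K) * (1 + x / t) := by
    rwa [Real.rpow_sub (by positivity), Real.rpow_one, div_le_iff₀ (by positivity)]
  calc x ≤ 1 + x := by linarith
    _ ≤ ((1 + K) * (1 + x / t)) ^ (1 - b)⁻¹ :=
      (Real.le_rpow_inv_iff_of_pos (by positivity) (by positivity) (by linarith)).2 hroot
    _ ≤ ((1 + K) * (1 + x / t)) ^ ⌈(1 - b)⁻¹⌉₊ := by
      rw [← Real.rpow_natCast]
      gcongr
      · nlinarith
      · exact Nat.le_ceil _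
    _ = (1 + K) ^ ⌈(1 - b)⁻¹⌉₊ * (1 + x / t) ^ ⌈(1 - b)⁻¹⌉₊ := mul_pow _ _ _

theorem AlmostIncreasing.exists_apply_max_le_mul {Ψ : ℝ → ℝ} (h : AlmostIncreasing Ψ)
    (hpos : ∀ x, 0 ≤ x → 0 < Ψ x) {T : ℝ} (hT : 0 ≤ T) :
    ∃ M, 0 < M ∧ ∀ y, 0 ≤ y → Ψ (max y T) ≤ M * Ψ y := by
  obtain ⟨A, -, hA⟩ := h
  refine ⟨max 1 (Ψ T / Ψ 0 * A), by positivity, fun y hy ↦ ?_⟩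
  have hy_pos := hpos y hy
  rcases le_total T y with hTy | hyT
  · rw [max_eq_left hTy]
    exact le_mul_of_one_le_left hy_pos.le (le_max_left _ _)
  · rw [max_eq_right hyT]
    have hT_pos := hpos T hT
    have h0_pos := hpos 0 le_rfl
    calc Ψ T = Ψ T / Ψ 0 * Ψ 0 := (div_mul_cancel₀ _ h0_pos.ne').symm
      _ ≤ Ψ T / Ψ 0 * (A * Ψ y) := by
        gcongr
        exact hA 0 y le_rfl hy
      _ = Ψ T / Ψ 0 * A * Ψ y := by ring
      _ ≤ max 1 (Ψ T / Ψ 0 * A) * Ψ y := by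
        gcongr
        exact le_max_right _ _

theorem le_mul_iff_inv_le_mul_inv {𝕜 : Type*} [Field 𝕜] [LinearOrder 𝕜] [IsStrictOrderedRing 𝕜]
    {a b c : 𝕜} (ha : 0 < a) (hb : 0 < b) : a ≤ c * b ↔ b⁻¹ ≤ c * a⁻¹ := by
  rw [← div_eq_mul_inv, le_div_iff₀ ha, inv_mul_le_iff₀ hb, mul_comm b c]

theorem AlmostIncreasing.inv {Ψ : ℝ → ℝ} (h : AlmostIncreasing Ψ)
    (hpos : ∀ x, 0 ≤ x → 0 < Ψ x) : AlmostDecreasing Ψ⁻¹ := by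
  obtain ⟨A, hA₀, hA⟩ := h
  exact ⟨A, hA₀, fun x y hx hxy ↦
    (le_mul_iff_inv_le_mul_inv (hpos x hx) (hpos y (hx.trans hxy))).1 (hA x y hx hxy)⟩

theorem AlmostDecreasing.inv {Ψ : ℝ → ℝ} (h : AlmostDecreasing Ψ)
    (hpos : ∀ x, 0 ≤ x → 0 < Ψ x) : AlmostIncreasing Ψ⁻¹ := by
  obtain ⟨A, hA₀, hA⟩ := h
  exact ⟨A, hA₀, fun x y hx hxy ↦
    (le_mul_iff_inv_le_mul_inv (hpos y (hx.trans hxy)) (hpos x hx)).1 (hA x y hx hxy)⟩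

namespace InClassL

variable {Ψ : ℝ → ℝ}

theorem exists_sq_le_mul (h : InClassL Ψ) :
    ∃ C, 0 < C ∧ ∀ x, 0 ≤ x → Ψ (x ^ 2) ≤ C * Ψ x := by
  obtain ⟨-, -, C, hC, hsq⟩ := h
  have hC₀ : 0 < C := by linarith
  exact ⟨C, hC₀, fun x hx ↦ (inv_mul_le_iff₀ hC₀).1 (hsq x hx).1⟩

theorem exists_pow_two_pow_le_mul (h : InClassL Ψ) (n : ℕ) :
    ∃ C, 0 < C ∧ ∀ x, 0 ≤ x → Ψ (x ^ 2 ^ n) ≤ C * Ψ x := by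
  obtain ⟨C, hC, hsq⟩ := h.exists_sq_le_mul
  refine ⟨C ^ n, by positivity, fun x hx ↦ ?_⟩
  induction n with
  | zero => simp
  | succ n ih =>
    calc Ψ (x ^ 2 ^ (n + 1)) = Ψ ((x ^ 2 ^ n) ^ 2) := by rw [← pow_mul, pow_succ]
      _ ≤ C * Ψ (x ^ 2 ^ n) := hsq _ (by positivity)
      _ ≤ C * (C ^ n * Ψ x) := by gcongr
      _ = C ^ (n + 1) * Ψ x := by ring

theorem inv (h : InClassL Ψ) : InClassL Ψ⁻¹ := by
  obtain ⟨hpos, hmono, C, hC, hsq⟩ := h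
  have hC₀ : 0 < C := by linarith
  refine ⟨fun x hx ↦ inv_pos.2 (hpos x hx),
    hmono.symm.imp (·.inv hpos) (·.inv hpos), C, hC, fun x hx ↦ ?_⟩
  have hx_pos := hpos x hx
  have hsq_pos := hpos (x ^ 2) (sq_nonneg x)
  rw [inv_mul_le_iff₀ hC₀]
  exact ⟨(le_mul_iff_inv_le_mul_inv hx_pos hsq_pos).1 (hsq x hx).2,
    (le_mul_iff_inv_le_mul_inv hsq_pos hx_pos).1 ((inv_mul_le_iff₀ hC₀).1 (hsq x hx).1)⟩

theorem bddAbove_image_Icc (h : InClassL Ψ) (T : ℝ) : BddAbove (Ψ '' Set.Icc 0 T) := by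
  obtain ⟨-, ⟨A, -, hA⟩ | ⟨A, -, hA⟩, -⟩ := h
  · exact ⟨A * Ψ T, Set.forall_mem_image.2 fun x hx ↦ hA x T hx.1 hx.2⟩
  · exact ⟨A * Ψ 0, Set.forall_mem_image.2 fun x hx ↦ hA 0 x le_rfl hx.1⟩

theorem exists_le_mul_one_add_rpow (h : InClassL Ψ) {ε : ℝ} (hε : 0 < ε) :
    ∃ K, ∀ x, 0 ≤ x → Ψ x ≤ K * (1 + x) ^ ε := by
  obtain ⟨C, hC, hsq⟩ := h.exists_sq_le_mul
  exact exists_le_mul_one_add_rpow_of_sq_le hC.le hε h.bddAbove_image_Icc hsq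

theorem exists_le_mul_of_almostIncreasing (h : InClassL Ψ) (hinc : AlmostIncreasing Ψ)
    (R : ℝ) (n : ℕ) :
    ∃ C, 0 < C ∧ ∀ x y, 0 ≤ x → 0 ≤ y → x ≤ R * (1 + y) ^ n → Ψ x ≤ C * Ψ y := by
  set T : ℝ := max R 2
  obtain ⟨M, hM₀, hM⟩ := hinc.exists_apply_max_le_mul h.1 (T := T) (by positivity)
  obtain ⟨C, hC₀, hC⟩ := h.exists_pow_two_pow_le_mul (2 * n + 1)
  obtain ⟨A, hA₀, hA⟩ := hinc
  refine ⟨A * C * M, by positivity, fun x y hx hy hxy ↦ ?_⟩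
  set z : ℝ := max y T
  have hRz : R ≤ z := (le_max_left R 2).trans (le_max_right y T)
  have hz : 2 ≤ z := (le_max_right R 2).trans (le_max_right y T)
  have hxz : x ≤ z ^ 2 ^ (2 * n + 1) :=
    calc x ≤ R * (1 + y) ^ n := hxy
      _ ≤ z * (z ^ 2) ^ n := by
        gcongr
        nlinarith [le_max_left y T]
      _ = z ^ (2 * n + 1) := by ring
      _ ≤ z ^ 2 ^ (2 * n + 1) := pow_le_pow_right₀ (by linarith) Nat.lt_two_pow_self.le
  calc Ψ x ≤ A * Ψ (z ^ 2 ^ (2 * n + 1)) := hA _ _ hx hxz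
    _ ≤ A * (C * (M * Ψ y)) := by
      gcongr
      exact (hC z (by linarith)).trans (by gcongr; exact hM y hy)
    _ = A * C * M * Ψ y := by ring

theorem exists_le_mul_of_le_mul_one_add_pow (h : InClassL Ψ) (R S : ℝ) (m n : ℕ) :
    ∃ C, 0 < C ∧ ∀ x y, 0 ≤ x → 0 ≤ y →
      x ≤ R * (1 + y) ^ m → y ≤ S * (1 + x) ^ n → Ψ x ≤ C * Ψ y := by
  rcases h.2.1 with hinc | hdec
  · obtain ⟨C, hC₀, hC⟩ := h.exists_le_mul_of_almostIncreasing hinc R m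
    exact ⟨C, hC₀, fun x y hx hy hxy _ ↦ hC x y hx hy hxy⟩
  · obtain ⟨C, hC₀, hC⟩ := h.inv.exists_le_mul_of_almostIncreasing (hdec.inv h.1) S n
    exact ⟨C, hC₀, fun x y hx hy _ hyx ↦
      (le_mul_iff_inv_le_mul_inv (h.1 x hx) (h.1 y hy)).2 (hC y x hy hx hyx)⟩

end InClassL

theorem classL_div_comparable_general {Φ Ψ : ℝ → ℝ} {a b K L : ℝ} (hΨ : InClassL Ψ)
    (hpos : ∀ x, 0 ≤ x → 0 < Φ x) (hb₀ : 0 ≤ b) (hb₁ : b < 1)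
    (hΦ : ∀ x, 0 ≤ x → Φ x ≤ K * (1 + x) ^ b)
    (hΦ_inv : ∀ x, 0 ≤ x → (Φ x)⁻¹ ≤ L * (1 + x) ^ a) :
    ∃ C : ℝ, 1 ≤ C ∧ ∀ x : ℝ, 0 ≤ x →
      C⁻¹ * Ψ x ≤ Ψ (x / Φ x) ∧ Ψ (x / Φ x) ≤ C * Ψ x := by
  set m := ⌈(1 - b)⁻¹⌉₊
  set n := ⌈1 + a⌉₊
  obtain ⟨C, hC₀, hC⟩ := hΨ.exists_le_mul_of_le_mul_one_add_pow ((1 + K) ^ m) L m n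
  obtain ⟨D, hD₀, hD⟩ := hΨ.exists_le_mul_of_le_mul_one_add_pow L ((1 + K) ^ m) n m
  refine ⟨1 + C + D, by linarith, fun x hx ↦ ?_⟩
  have hu : 0 ≤ x / Φ x := div_nonneg hx (hpos x hx).le
  have hxu := le_mul_one_add_div_pow hx (hpos x hx) hb₀ hb₁ (hΦ x hx)
  have hux := div_le_mul_one_add_pow hx (hpos x hx) (hΦ_inv x hx)
  have hΨx := hΨ.1 x hx
  have hΨu := hΨ.1 _ hu
  rw [inv_mul_le_iff₀ (by positivity)]
  exact ⟨(hC x _ hx hu hxu hux).trans (by gcongr; linarith),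
    (hD _ x hu hx hux hxu).trans (by gcongr; linarith)⟩

theorem classL_div_comparable (Φ Ψ : ℝ → ℝ) (hΦ : InClassL Φ) (hΨ : InClassL Ψ) :
    ∃ C : ℝ, 1 ≤ C ∧ ∀ x : ℝ, 0 ≤ x →
      C⁻¹ * Ψ x ≤ Ψ (x / Φ x) ∧ Ψ (x / Φ x) ≤ C * Ψ x := by
  obtain ⟨K, hK⟩ := hΦ.exists_le_mul_one_add_rpow (ε := 1 / 2) (by norm_num)
  obtain ⟨L, hL⟩ := hΦ.inv.exists_le_mul_one_add_rpow one_pos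
  exact classL_div_comparable_general hΨ hΦ.1 (by norm_num) (by norm_num) hK hL
end
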